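/- Under the compact nonzero-sum game setup with the quantization condition lim_{δ→0} ω_δ(2δ) = 0 and discount factor β ∈ (0,1), for each δ > 0 let π*_δ be a stationary perfect Nash equilibrium of the finite δ-model (which exists by Fink's theorem). Then for each player i = 1,…,N, sup_{x∈X} |Ĵ*_δ(π^{*,-i}_δ; x) − J*(π^{*,-i}_δ; x)| → 0 as δ → 0, where Ĵ*_δ(π^{*,-i}_δ;·) is the piecewise-constant extension to X of the finite-model best-response value and J*(π^{*,-i}_δ;·) is the original-model discounted best-response value against the extended equilibrium policies. -/

import Mathlib

open MeasureTheory Filter Topology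

noncomputable section

/-- Total variation distance between two measures:
`‖μ − ν‖_TV = 2 sup_{D measurable} |μ(D) − ν(D)|`. -/
def tvDist {α : Type*} [MeasurableSpace α] (μ ν : Measure α) : ℝ :=
  2 * ⨆ D : {D : Set α // MeasurableSet D}, |(μ D.1).toReal - (ν D.1).toReal|

/-- The normalized restriction `ν^z_δ` of `ν` to the quantization cell `Q⁻¹{z}`. -/
def cellMeasure {X : Type*} [MeasurableSpace X] (ν : Measure X) (Q : X → X) (z : X) :
    Measure X :=
  (ν (Q ⁻¹' {z}))⁻¹ • ν.restrict (Q ⁻¹' {z})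

/-!
On a quantization cell, and up to the mesh of the action net, the costs `c + β ∫ J dp` vary by at
most the oscillation of `c` plus a multiple of `ω_δ(2δ)`: the finite-model value `J` is constant on
cells, so its integral only sees the pushed-forward kernel. Hence `J` almost solves the fixed-point
equation of the best-response operator of the original model, and that operator is a
`|β|`-contraction, so `J` is uniformly close to its fixed point `J'`.

The contraction estimate compares integrals of `J` and `J'`, so `J'` has to be measurable. By
setwise continuity of the kernel the costs `c + β ∫ J' dp` are bounded functions of the first Baire
class in the state and the action; their strict sublevel sets are σ-compact, and so are the
projections of these sets to the state space, which are the strict sublevel sets of the minimum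
over the actions.
-/

section SupInf

lemma ciSup_le_div_one_sub {α : Type*} [Nonempty α] {f : α → ℝ} {a b : ℝ} (hb : b < 1)
    (h : ∀ x, f x ≤ a + b * ⨆ y, f y) : ⨆ x, f x ≤ a / (1 - b) := by
  have hsup : ⨆ x, f x ≤ a + b * ⨆ y, f y := ciSup_le h
  rw [le_div_iff₀ (sub_pos.2 hb)]
  linarith

lemma ciInf_le_ciInf_add {α : Type*} [Nonempty α] {f g : α → ℝ} {ε : ℝ}
    (hf : BddBelow (Set.range f)) (h : ∀ a, f a ≤ g a + ε) : ⨅ a, f a ≤ (⨅ a, g a) + ε := by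
  rw [← sub_le_iff_le_add]
  exact le_ciInf fun a => sub_le_iff_le_add.2 ((ciInf_le hf a).trans (h a))

lemma abs_ciInf_sub_ciInf_le {α : Type*} [Nonempty α] {f g : α → ℝ} {ε : ℝ}
    (hf : BddBelow (Set.range f)) (h : ∀ a, |f a - g a| ≤ ε) :
    |(⨅ a, f a) - ⨅ a, g a| ≤ ε := by
  have hfg (a : α) : f a ≤ g a + ε := by linarith [(abs_le.1 (h a)).2]
  have hgf (a : α) : g a ≤ f a + ε := by linarith [(abs_le.1 (h a)).1]
  have hg : BddBelow (Set.range g) := by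
    obtain ⟨m, hm⟩ := hf
    refine ⟨m - ε, Set.forall_mem_range.2 fun a => ?_⟩
    linarith [hm (Set.mem_range_self a), hfg a]
  rw [abs_le]
  constructor <;> linarith [ciInf_le_ciInf_add hf hfg, ciInf_le_ciInf_add hg hgf]

lemma bddBelow_range_of_abs_le {α : Type*} {f : α → ℝ} {K : ℝ} (hf : ∀ a, |f a| ≤ K) :
    BddBelow (Set.range f) :=
  ⟨-K, Set.forall_mem_range.2 fun a => (abs_le.1 (hf a)).1⟩

lemma abs_ciInf_le {α : Type*} [Nonempty α] {f : α → ℝ} {K : ℝ} (hf : ∀ a, |f a| ≤ K) :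
    |⨅ a, f a| ≤ K := by
  simpa using abs_ciInf_sub_ciInf_le (g := fun _ => 0) (bddBelow_range_of_abs_le hf) (by simpa)

lemma abs_ciInf_subtype_sub_ciInf_le {α : Type*} [Nonempty α] {f : α → ℝ} {s : Set α} {ε : ℝ}
    (hf : BddBelow (Set.range f)) (hs : ∀ a, ∃ b ∈ s, |f b - f a| ≤ ε) :
    |(⨅ b : s, f b) - ⨅ a, f a| ≤ ε := by
  have hsub : BddBelow (Set.range fun b : s => f b) :=
    hf.mono (Set.range_comp_subset_range Subtype.val f)
  obtain ⟨b₀, hb₀, -⟩ := hs (Classical.arbitrary α)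
  have : Nonempty s := ⟨⟨b₀, hb₀⟩⟩
  rw [abs_of_nonneg (sub_nonneg.2 (le_ciInf fun b : s => ciInf_le hf b)), sub_le_comm]
  refine le_ciInf fun a => ?_
  obtain ⟨b, hb, hba⟩ := hs a
  linarith [ciInf_le hsub ⟨b, hb⟩, (abs_le.1 hba).2]

end SupInf

section BoundedIntegrals

variable {X : Type*} [MeasurableSpace X] {μ : Measure X} [IsProbabilityMeasure μ]

lemma abs_integral_le_of_abs_le {f : X → ℝ} {K : ℝ} (hf : ∀ᵐ x ∂μ, |f x| ≤ K) :
    |∫ x, f x ∂μ| ≤ K := by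
  simpa using norm_integral_le_of_norm_le_const (f := f) hf

lemma abs_integral_sub_integral_le {f g : X → ℝ} {ε : ℝ} (hf : Integrable f μ)
    (hg : Integrable g μ) (h : ∀ᵐ x ∂μ, |f x - g x| ≤ ε) :
    |∫ x, f x ∂μ - ∫ x, g x ∂μ| ≤ ε := by
  rw [← integral_sub hf hg]
  exact abs_integral_le_of_abs_le h

lemma antitone_measureReal_superlevel (μ : Measure X) [IsFiniteMeasure μ] (f : X → ℝ) :
    Antitone fun t => μ.real {x | t ≤ f x} :=
  fun _ _ hst => measureReal_mono fun _ hx => hst.trans hx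

lemma integral_eq_integral_measureReal_superlevel_sub {f : X → ℝ} {M : ℝ} (hf : Measurable f)
    (hM : ∀ x, |f x| ≤ M) :
    ∫ x, f x ∂μ = (∫ t in Set.Ioc 0 (2 * M), μ.real {x | t ≤ f x + M}) - M := by
  have hint : Integrable f μ := .of_bound hf.aestronglyMeasurable M (ae_of_all _ hM)
  have layerCake := (hint.add (integrable_const M)).integral_eq_integral_Ioc_meas_le
    (ae_of_all _ fun x => neg_le_iff_add_nonneg.1 (abs_le.1 (hM x)).1)
    (ae_of_all _ fun x => show f x + M ≤ 2 * M by linarith [(abs_le.1 (hM x)).2])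
  rw [integral_add' hint (integrable_const M)] at layerCake
  simp only [integral_const, probReal_univ, one_smul, Pi.add_apply] at layerCake
  linarith

end BoundedIntegrals

section TotalVariation

variable {X : Type*} [MeasurableSpace X] (μ ν : Measure X) [IsProbabilityMeasure μ]
  [IsProbabilityMeasure ν]

lemma abs_measureReal_sub_le_one (D : Set X) : |μ.real D - ν.real D| ≤ 1 := by
  rw [abs_le]
  constructor <;> linarith [measureReal_nonneg (μ := μ) (s := D),
    measureReal_le_one (μ := μ) (s := D), measureReal_nonneg (μ := ν) (s := D),
    measureReal_le_one (μ := ν) (s := D)]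

lemma tvDist_le_two : tvDist μ ν ≤ 2 := by
  have := Real.iSup_le (fun D : {D : Set X // MeasurableSet D} =>
    abs_measureReal_sub_le_one μ ν D.1) zero_le_one
  rw [tvDist]
  exact (mul_le_mul_of_nonneg_left this zero_le_two).trans_eq (mul_one 2)

variable {μ ν}

lemma abs_measureReal_sub_le_tvDist {D : Set X} (hD : MeasurableSet D) :
    |μ.real D - ν.real D| ≤ tvDist μ ν / 2 := by
  have hbdd : BddAbove (Set.range fun D : {D : Set X // MeasurableSet D} =>
      |μ.real D.1 - ν.real D.1|) :=
    ⟨1, Set.forall_mem_range.2 fun D => abs_measureReal_sub_le_one μ ν D.1⟩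
  rw [tvDist, mul_div_cancel_left₀ _ two_ne_zero]
  exact le_ciSup hbdd ⟨D, hD⟩

lemma abs_integral_sub_le_mul_tvDist {f : X → ℝ} {M : ℝ} (hf : Measurable f)
    (hM : ∀ x, |f x| ≤ M) : |∫ x, f x ∂μ - ∫ x, f x ∂ν| ≤ M * tvDist μ ν := by
  have hM0 : 0 ≤ M := (abs_nonneg _).trans (hM μ.nonempty_of_neZero.some)
  have hint (ρ : Measure X) [IsProbabilityMeasure ρ] :
      IntegrableOn (fun t => ρ.real {x | t ≤ f x + M}) (Set.Ioc 0 (2 * M)) :=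
    ((antitone_measureReal_superlevel ρ _).locallyIntegrable.integrableOn_isCompact
      isCompact_Icc).mono_set Set.Ioc_subset_Icc_self
  rw [integral_eq_integral_measureReal_superlevel_sub hf hM,
    integral_eq_integral_measureReal_superlevel_sub hf hM, sub_sub_sub_cancel_right,
    ← integral_sub (hint μ) (hint ν)]
  calc |∫ t in Set.Ioc 0 (2 * M), (μ.real {x | t ≤ f x + M} - ν.real {x | t ≤ f x + M})|
      ≤ tvDist μ ν / 2 * volume.real (Set.Ioc 0 (2 * M)) := by
        rw [← Real.norm_eq_abs]
        exact norm_setIntegral_le_of_norm_le_const measure_Ioc_lt_top fun t _ =>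
          abs_measureReal_sub_le_tvDist (measurableSet_le measurable_const (hf.add_const M))
    _ = M * tvDist μ ν := by
        rw [Real.volume_real_Ioc_of_le (by positivity)]
        ring

end TotalVariation

section BoundedBaireOne

lemma setOf_lt_eq_iUnion_of_tendsto {Y : Type*} {F : Y → ℝ} {G : ℕ → Y → ℝ}
    (hG : ∀ y, Tendsto (fun n => G n y) atTop (𝓝 (F y))) (r : ℝ) :
    {y | F y < r} = ⋃ q : ℕ × ℕ, {y | ∀ n ≥ q.1, G n y ≤ r - 1 / (q.2 + 1)} := by
  ext y
  simp only [Set.mem_ofPred_eq, Set.mem_iUnion, Prod.exists]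
  constructor
  · intro hr
    obtain ⟨k, hk⟩ := exists_nat_one_div_lt (sub_pos.2 hr)
    obtain ⟨N, hN⟩ := eventually_atTop.1
      ((hG y).eventually_le_const (show F y < r - 1 / (k + 1) by linarith))
    exact ⟨N, k, hN⟩
  · rintro ⟨N, k, hN⟩
    have hle : F y ≤ r - 1 / (k + 1) := le_of_tendsto (hG y) (eventually_atTop.2 ⟨N, hN⟩)
    have : (0 : ℝ) < 1 / (k + 1) := Nat.one_div_pos_of_nat
    linarith

/-- Bounded functions of the first Baire class: pointwise limits of uniformly bounded sequences of
continuous functions. Bochner integrals of a non-measurable function against a setwise continuous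
family are of this type, which is what makes the best-response value measurable. -/
def IsBoundedBaireOne {Y : Type*} [TopologicalSpace Y] (F : Y → ℝ) : Prop :=
  ∃ (G : ℕ → Y → ℝ) (K : ℝ), (∀ n, Continuous (G n)) ∧ (∀ n y, |G n y| ≤ K) ∧
    ∀ y, Tendsto (fun n => G n y) atTop (𝓝 (F y))

namespace IsBoundedBaireOne

variable {Y Z : Type*} [TopologicalSpace Y] [TopologicalSpace Z] {F : Y → ℝ}

lemma exists_abs_le (hF : IsBoundedBaireOne F) : ∃ K, ∀ y, |F y| ≤ K := by
  obtain ⟨G, K, -, hK, hG⟩ := hF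
  exact ⟨K, fun y => le_of_tendsto (hG y).abs (.of_forall fun n => hK n y)⟩

lemma measurable [MeasurableSpace Y] [OpensMeasurableSpace Y] (hF : IsBoundedBaireOne F) :
    Measurable F := by
  obtain ⟨G, -, hc, -, hG⟩ := hF
  exact measurable_of_tendsto_metrizable (fun n => (hc n).measurable) (tendsto_pi_nhds.2 hG)

lemma integrable [MeasurableSpace Y] [OpensMeasurableSpace Y] (hF : IsBoundedBaireOne F)
    (μ : Measure Y) [IsFiniteMeasure μ] : Integrable F μ := by
  obtain ⟨K, hK⟩ := hF.exists_abs_le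
  exact .of_bound hF.measurable.aestronglyMeasurable K (ae_of_all _ hK)

lemma comp_continuous (hF : IsBoundedBaireOne F) {u : Z → Y} (hu : Continuous u) :
    IsBoundedBaireOne fun z => F (u z) := by
  obtain ⟨G, K, hc, hK, hG⟩ := hF
  exact ⟨fun n z => G n (u z), K, fun n => (hc n).comp hu, fun n z => hK n (u z),
    fun z => hG (u z)⟩

lemma continuous_add_const_mul (hF : IsBoundedBaireOne F) {g : Y → ℝ} {C : ℝ} (hg : Continuous g)
    (hC : ∀ y, |g y| ≤ C) (r : ℝ) : IsBoundedBaireOne fun y => g y + r * F y := by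
  obtain ⟨G, K, hc, hK, hG⟩ := hF
  refine ⟨fun n y => g y + r * G n y, C + |r| * K, fun n => hg.add ((hc n).const_mul r),
    fun n y => (abs_add_le _ _).trans (add_le_add (hC y) ?_),
    fun y => ((hG y).const_mul r).const_add _⟩
  rw [abs_mul]
  exact mul_le_mul_of_nonneg_left (hK n y) (abs_nonneg r)

lemma integral [FirstCountableTopology Y] [MeasurableSpace Z] [OpensMeasurableSpace Z]
    {F : Y × Z → ℝ} (hF : IsBoundedBaireOne F) (μ : Measure Z) [IsFiniteMeasure μ] :
    IsBoundedBaireOne fun y => ∫ z, F (y, z) ∂μ := by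
  obtain ⟨G, K, hc, hK, hG⟩ := hF
  have hmeas (n : ℕ) (y : Y) : AEStronglyMeasurable (fun z => G n (y, z)) μ :=
    ((hc n).comp (by fun_prop)).measurable.aestronglyMeasurable
  refine ⟨fun n y => ∫ z, G n (y, z) ∂μ, K * μ.real Set.univ, fun n => ?_,
    fun n y => ?_, fun y => ?_⟩
  · exact continuous_of_dominated (hmeas n) (fun y => ae_of_all _ fun z => hK n (y, z))
      (integrable_const K) (ae_of_all _ fun z => (hc n).comp (by fun_prop))
  · rw [← Real.norm_eq_abs]
    exact norm_integral_le_of_norm_le_const (ae_of_all _ fun z => hK n (y, z))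
  · exact tendsto_integral_of_dominated_convergence _ (fun n => hmeas n y) (integrable_const K)
      (fun n => ae_of_all _ fun z => hK n (y, z)) (ae_of_all _ fun z => hG (y, z))

lemma isSigmaCompact_setOf_lt [CompactSpace Y] (hF : IsBoundedBaireOne F) (r : ℝ) :
    IsSigmaCompact {y | F y < r} := by
  obtain ⟨G, -, hc, -, hG⟩ := hF
  rw [setOf_lt_eq_iUnion_of_tendsto hG]
  refine isSigmaCompact_iUnion_of_isCompact _ fun q => IsClosed.isCompact ?_
  simp only [Set.ofPred_forall]
  exact isClosed_iInter fun n => isClosed_iInter fun _ => isClosed_le (hc n) continuous_const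

lemma measurable_iInf [CompactSpace Y] [T2Space Y] [MeasurableSpace Y] [OpensMeasurableSpace Y]
    [CompactSpace Z] [Nonempty Z] {F : Y × Z → ℝ} (hF : IsBoundedBaireOne F) :
    Measurable fun y => ⨅ z, F (y, z) := by
  obtain ⟨K, hK⟩ := hF.exists_abs_le
  refine measurable_of_Iio fun r => ?_
  have hproj : (fun y => ⨅ z, F (y, z)) ⁻¹' Set.Iio r = Prod.fst '' {q | F q < r} := by
    ext y
    simpa using ciInf_lt_iff (bddBelow_range_of_abs_le fun z => hK (y, z))
  obtain ⟨S, hS, hSr⟩ := (hF.isSigmaCompact_setOf_lt r).image continuous_fst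
  rw [hproj, ← hSr]
  exact .iUnion fun n => (hS n).measurableSet

end IsBoundedBaireOne

end BoundedBaireOne

section SetwiseContinuity

/-- Setwise continuity of a family of measures: the measure of every measurable set depends
continuously on the parameter. -/
def SetwiseContinuous {Y X : Type*} [TopologicalSpace Y] [MeasurableSpace X]
    (P : Y → Measure X) : Prop :=
  ∀ D, MeasurableSet D → Continuous fun y => (P y).real D

variable {Y X : Type*} [TopologicalSpace Y] [MeasurableSpace X] {P : Y → Measure X}
  [∀ y, IsProbabilityMeasure (P y)]

lemma SetwiseContinuous.continuous_integral [FirstCountableTopology Y] (hP : SetwiseContinuous P)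
    {f : X → ℝ} {M : ℝ} (hf : Measurable f) (hM : ∀ x, |f x| ≤ M) :
    Continuous fun y => ∫ x, f x ∂(P y) := by
  simp_rw [integral_eq_integral_measureReal_superlevel_sub hf hM]
  refine (continuous_of_dominated (bound := fun _ => 1) (fun y => ?_) (fun y => ?_)
    (integrable_const 1) ?_).sub continuous_const
  · exact (antitone_measureReal_superlevel (P y) _).measurable.aestronglyMeasurable
  · exact ae_of_all _ fun t => (abs_of_nonneg measureReal_nonneg).trans_le measureReal_le_one
  · exact ae_of_all _ fun t => hP _ (measurableSet_le measurable_const (hf.add_const M))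

-- One null set serves a countable dense set of parameters, and by setwise continuity it is then
-- null for every parameter in the closure.
lemma SetwiseContinuous.exists_measurable_ae_eq [TopologicalSpace.PseudoMetrizableSpace Y]
    [SecondCountableTopology Y] (hP : SetwiseContinuous P) (J : X → ℝ) :
    ∃ f : X → ℝ, Measurable f ∧ ∀ y ∈ closure {y | AEMeasurable J (P y)}, J =ᵐ[P y] f := by
  obtain ⟨t, htE, htc, hEt⟩ := (TopologicalSpace.IsSeparable.of_separableSpace
    {y | AEMeasurable J (P y)}).exists_countable_dense_subset
  have : Countable t := htc.to_subtype
  obtain ⟨f, hf, hJf⟩ : AEMeasurable J (Measure.sum fun y : t => P y) :=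
    aemeasurable_sum_measure_iff.2 fun y => htE y.2
  refine ⟨f, hf, fun y hy => ?_⟩
  obtain ⟨Z, hZ, hZm, hZ0⟩ := exists_measurable_superset_of_null (ae_iff.1 hJf)
  have hclosed : IsClosed {y | (P y).real Z = 0} := isClosed_eq (hP Z hZm) continuous_const
  have ht : t ⊆ {y | (P y).real Z = 0} := fun y hy => by
    simp [Measure.real, Measure.sum_apply_eq_zero.1 hZ0 ⟨y, hy⟩]
  have hy0 : (P y).real Z = 0 :=
    closure_minimal ht hclosed (closure_minimal hEt isClosed_closure hy)
  exact ae_iff.2 (measure_mono_null hZ ((measureReal_eq_zero_iff).1 hy0))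

-- The parameters for which `J` is a.e. measurable form a closed set, on which the integral is the
-- restriction of a continuous function; off this set the Bochner integral is `0` by convention.
lemma SetwiseContinuous.isBoundedBaireOne_integral [TopologicalSpace.PseudoMetrizableSpace Y]
    [SecondCountableTopology Y] (hP : SetwiseContinuous P) {J : X → ℝ} {M : ℝ}
    (hM : ∀ x, |J x| ≤ M) : IsBoundedBaireOne fun y => ∫ x, J x ∂(P y) := by
  set E := {y | AEMeasurable J (P y)}
  obtain ⟨f, hf, hJf⟩ := hP.exists_measurable_ae_eq J
  have hE : IsClosed E := isClosed_of_closure_subset fun y hy => ⟨f, hf, hJf y hy⟩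
  let h : X → ℝ := fun x => max (-|M|) (min |M| (f x))
  have hh : Measurable h := measurable_const.max (measurable_const.min hf)
  have hhM (x : X) : |h x| ≤ |M| :=
    abs_le.2 ⟨le_max_left _ _, max_le (neg_le_self (abs_nonneg M)) (min_le_left _ _)⟩
  have hJh {y : Y} (hy : y ∈ E) : ∫ x, J x ∂(P y) = ∫ x, h x ∂(P y) := by
    refine integral_congr_ae ((hJf y (subset_closure hy)).mono fun x hx => ?_)
    obtain ⟨h₁, h₂⟩ := abs_le.1 ((hM x).trans (le_abs_self M))
    simp only [h, ← hx, min_eq_right h₂, max_eq_right h₁]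
  refine ⟨fun n y => hE.apprSeq n y * ∫ x, h x ∂(P y), |M|, fun n => ?_, fun n y => ?_,
    fun y => ?_⟩
  · exact (NNReal.continuous_coe.comp (hE.apprSeq n).continuous).mul
      (hP.continuous_integral hh hhM)
  · rw [abs_mul, NNReal.abs_eq]
    exact (mul_le_mul (mod_cast HasOuterApproxClosed.apprSeq_apply_le_one hE n y)
      (abs_integral_le_of_abs_le (ae_of_all _ hhM)) (abs_nonneg _) zero_le_one).trans_eq
      (one_mul _)
  · have hlim := (NNReal.tendsto_coe.2
      (tendsto_pi_nhds.1 (HasOuterApproxClosed.tendsto_apprSeq hE) y)).mul_const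
      (∫ x, h x ∂(P y))
    by_cases hy : y ∈ E
    · simpa [hy, hJh hy] using hlim
    · have hJ0 : ∫ x, J x ∂(P y) = 0 := integral_undef fun hi => hy hi.aemeasurable
      simpa [hy, hJ0] using hlim

end SetwiseContinuity

section StageValue

variable {X B : Type*} [MeasurableSpace X] {c : X → B → ℝ} {p : X → B → Measure X} {β : ℝ}
  {J J' : X → ℝ}

/-- The cost-to-go: the stage cost plus the discounted expected continuation value `J`. -/
def stageValue (c : X → B → ℝ) (p : X → B → Measure X) (β : ℝ) (J : X → ℝ) (x : X) (b : B) : ℝ :=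
  c x b + β * ∫ y, J y ∂(p x b)

/-- `f` varies by at most `η` between state-action pairs whose distances add up to at most `r`,
the sum metric used in the definition of `ω_δ`. -/
def HasOscillationLE {X B : Type*} [Dist X] [Dist B] (f : X → B → ℝ) (r η : ℝ) : Prop :=
  ∀ ⦃x y : X⦄ ⦃a b : B⦄, dist x y + dist a b ≤ r → |f x a - f y b| ≤ η

/-- The modulus `ω_δ(r)` of total variation continuity of the kernel `p` pushed forward by the
quantizer `Q`. -/
def quantizationModulus [Dist X] [Dist B] (p : X → B → Measure X) (Q : X → X) (r : ℝ) : ℝ :=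
  sSup {v : ℝ | ∃ x y : X, ∃ a b : B,
    dist x y + dist a b ≤ r ∧ v = tvDist ((p x a).map Q) ((p y b).map Q)}

lemma isBoundedBaireOne_stageValue [TopologicalSpace X] [TopologicalSpace B]
    [TopologicalSpace.PseudoMetrizableSpace (X × B)] [SecondCountableTopology (X × B)]
    [∀ x b, IsProbabilityMeasure (p x b)] {C M : ℝ} (hc : Continuous fun q : X × B => c q.1 q.2)
    (hC : ∀ x b, |c x b| ≤ C) (hp : SetwiseContinuous fun q : X × B => p q.1 q.2)
    (hM : ∀ x, |J x| ≤ M) : IsBoundedBaireOne fun q : X × B => stageValue c p β J q.1 q.2 :=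
  (hp.isBoundedBaireOne_integral hM).continuous_add_const_mul hc (fun q => hC q.1 q.2) β

variable [∀ x b, IsProbabilityMeasure (p x b)]

lemma abs_stageValue_le {C M : ℝ} (hC : ∀ x b, |c x b| ≤ C) (hM : ∀ x, |J x| ≤ M) (x : X)
    (b : B) :
    |stageValue c p β J x b| ≤ C + |β| * M := by
  refine (abs_add_le _ _).trans (add_le_add (hC x b) ?_)
  rw [abs_mul]
  exact mul_le_mul_of_nonneg_left (abs_integral_le_of_abs_le (ae_of_all _ hM)) (abs_nonneg β)

lemma abs_stageValue_sub_le {D : ℝ} {x : X} {b : B} (hJ : Integrable J (p x b))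
    (hJ' : Integrable J' (p x b)) (hD : ∀ y, |J y - J' y| ≤ D) :
    |stageValue c p β J x b - stageValue c p β J' x b| ≤ |β| * D := by
  rw [stageValue, stageValue, add_sub_add_left_eq_sub, ← mul_sub, abs_mul]
  exact mul_le_mul_of_nonneg_left (abs_integral_sub_integral_le hJ hJ' (ae_of_all _ hD))
    (abs_nonneg β)

lemma tvDist_map_le_quantizationModulus [Dist X] [Dist B] {Q : X → X} (hQ : Measurable Q)
    {x y : X} {a b : B} {r : ℝ} (h : dist x y + dist a b ≤ r) :
    tvDist ((p x a).map Q) ((p y b).map Q) ≤ quantizationModulus p Q r := by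
  have (x : X) (b : B) : IsProbabilityMeasure ((p x b).map Q) :=
    Measure.isProbabilityMeasure_map hQ.aemeasurable
  refine le_csSup ⟨2, ?_⟩ ⟨x, y, a, b, h, rfl⟩
  rintro _ ⟨x, y, a, b, -, rfl⟩
  exact tvDist_le_two _ _

lemma hasOscillationLE_stageValue [Dist X] [Dist B] {Q : X → X} {r ε K : ℝ}
    (hc : HasOscillationLE c r ε) (hQ : Measurable Q) (hJ : Measurable J) (hK : ∀ x, |J x| ≤ K)
    (hJQ : ∀ x, J x = J (Q x)) :
    HasOscillationLE (stageValue c p β J) r (ε + |β| * (K * quantizationModulus p Q r)) := by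
  intro x y a b h
  have (x : X) (b : B) : IsProbabilityMeasure ((p x b).map Q) :=
    Measure.isProbabilityMeasure_map hQ.aemeasurable
  have hmap (x : X) (b : B) : ∫ y, J y ∂(p x b) = ∫ y, J y ∂(p x b).map Q := by
    rw [integral_map hQ.aemeasurable hJ.aestronglyMeasurable]
    exact integral_congr_ae (ae_of_all _ hJQ)
  have htv : |∫ y, J y ∂(p x a) - ∫ y, J y ∂(p y b)| ≤ K * quantizationModulus p Q r := by
    rw [hmap, hmap]
    exact (abs_integral_sub_le_mul_tvDist hJ hK).trans (mul_le_mul_of_nonneg_left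
      (tvDist_map_le_quantizationModulus hQ h) ((abs_nonneg _).trans (hK x)))
  rw [stageValue, stageValue, add_sub_add_comm, ← mul_sub]
  refine (abs_add_le _ _).trans (add_le_add (hc h) ?_)
  rw [abs_mul]
  exact mul_le_mul_of_nonneg_left htv (abs_nonneg β)

lemma eventually_hasOscillationLE {X B : Type*} [PseudoMetricSpace X] [CompactSpace X]
    [PseudoMetricSpace B] [CompactSpace B] {c : X → B → ℝ}
    (hc : Continuous fun q : X × B => c q.1 q.2) {ε : ℝ} (hε : 0 < ε) :
    ∀ᶠ r in 𝓝 0, HasOscillationLE c r ε := by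
  obtain ⟨r₀, hr₀, hcr⟩ := Metric.uniformContinuous_iff.1
    (CompactSpace.uniformContinuous_of_continuous hc) ε hε
  filter_upwards [gt_mem_nhds hr₀] with r hr x y a b h
  refine (hcr (a := (x, a)) (b := (y, b)) (max_lt ?_ ?_)).le <;>
    linarith [dist_nonneg (x := x) (y := y), dist_nonneg (x := a) (y := b)]

end StageValue

section Deviation

variable {ι : Type*} [Fintype ι] [DecidableEq ι] {A : ι → Type*} [∀ j, MeasurableSpace (A j)]

/-- The expected cost of player `i` when playing the pure action `a` against the mixed actions
`m j`, `j ≠ i`; the value of `m i` is discarded. -/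
def deviationCost (i : ι) (m : ∀ j, Measure (A j)) (φ : (∀ j, A j) → ℝ) (a : A i) : ℝ :=
  ∫ b, φ b ∂(Measure.pi (Function.update m i (Measure.dirac a)))

variable (i : ι) (m : ∀ j, Measure (A j)) [∀ j, IsProbabilityMeasure (m j)]

instance isProbabilityMeasure_update_dirac (a : A i) (j : ι) :
    IsProbabilityMeasure (Function.update m i (Measure.dirac a) j) := by
  rcases eq_or_ne j i with rfl | hj
  · rw [Function.update_self]
    infer_instance
  · rw [Function.update_of_ne hj]
    infer_instance

lemma pi_update_dirac (a : A i) :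
    Measure.pi (Function.update m i (Measure.dirac a)) =
      (Measure.pi m).map fun b => Function.update b i a := by
  let u : ∀ j, A j → A j := Function.update (fun _ => id) i fun _ => a
  have hu (j : ι) : Measurable (u j) := by
    rcases eq_or_ne j i with rfl | hj
    · simp [u]
    · simpa [u, hj] using measurable_id
  have hmap : (fun j => (m j).map (u j)) = Function.update m i (Measure.dirac a) := by
    ext1 j
    rcases eq_or_ne j i with rfl | hj
    · simp [u, Measure.map_const]
    · simp [u, hj]
  have hupd : (fun b j => u j (b j)) = fun b => Function.update b i a := by
    ext b j
    rcases eq_or_ne j i with rfl | hj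
    · simp [u]
    · simp [u, hj]
  have (j : ι) : IsProbabilityMeasure ((m j).map (u j)) :=
    Measure.isProbabilityMeasure_map (hu j).aemeasurable
  rw [← hmap, ← Measure.pi_map_pi fun j => (hu j).aemeasurable, hupd]

variable {i m} {φ ψ : (∀ j, A j) → ℝ}

lemma deviationCost_eq_integral_update (hφ : Measurable φ) (a : A i) :
    deviationCost i m φ a = ∫ b, φ (Function.update b i a) ∂(Measure.pi m) := by
  rw [deviationCost, pi_update_dirac, integral_map measurable_update_left.aemeasurable
    hφ.aestronglyMeasurable]

lemma abs_deviationCost_le {K : ℝ} (hK : ∀ b, |φ b| ≤ K) (a : A i) :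
    |deviationCost i m φ a| ≤ K :=
  abs_integral_le_of_abs_le (ae_of_all _ hK)

variable [∀ j, TopologicalSpace (A j)] [∀ j, SecondCountableTopology (A j)] [∀ j, BorelSpace (A j)]

lemma abs_deviationCost_sub_le {ε : ℝ} (hφ : IsBoundedBaireOne φ) (hψ : IsBoundedBaireOne ψ)
    (hε : ∀ b, |φ b - ψ b| ≤ ε) (a : A i) :
    |deviationCost i m φ a - deviationCost i m ψ a| ≤ ε :=
  abs_integral_sub_integral_le (hφ.integrable _) (hψ.integrable _) (ae_of_all _ hε)

lemma isBoundedBaireOne_deviationCost {X : Type*} [TopologicalSpace X]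
    [FirstCountableTopology X] {f : X → (∀ j, A j) → ℝ}
    (hf : IsBoundedBaireOne fun q : X × (∀ j, A j) => f q.1 q.2) :
    IsBoundedBaireOne fun q : X × A i => deviationCost i m (f q.1) q.2 := by
  have hmeas (x : X) : Measurable (f x) :=
    (hf.comp_continuous (Continuous.prodMk_right x)).measurable
  simp_rw [deviationCost_eq_integral_update (hmeas _)]
  exact (hf.comp_continuous (u := fun q : (X × A i) × (∀ j, A j) =>
    (q.1.1, Function.update q.2 i q.1.2)) (by fun_prop)).integral (Measure.pi m)

end Deviation

section DeviationOscillation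

variable {X : Type*} [PseudoMetricSpace X] {ι : Type*} [Fintype ι] [DecidableEq ι] {A : ι → Type*}
  [∀ j, PseudoMetricSpace (A j)] [∀ j, SecondCountableTopology (A j)] [∀ j, MeasurableSpace (A j)]
  [∀ j, BorelSpace (A j)]

lemma hasOscillationLE_deviationCost {f : X → (∀ j, A j) → ℝ}
    {r η : ℝ} (hfη : HasOscillationLE f r η)
    (hf : IsBoundedBaireOne fun q : X × (∀ j, A j) => f q.1 q.2) (i : ι) (m : ∀ j, Measure (A j))
    [∀ j, IsProbabilityMeasure (m j)] :
    HasOscillationLE (fun x (a : A i) => deviationCost i m (f x) a) r η := by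
  intro x y a a' h
  have hfx (x : X) : IsBoundedBaireOne (f x) := hf.comp_continuous (Continuous.prodMk_right x)
  have hint (x : X) (a : A i) : Integrable (fun b => f x (Function.update b i a)) (Measure.pi m) :=
    ((hfx x).comp_continuous (u := fun b => Function.update b i a) (by fun_prop)).integrable _
  dsimp only
  rw [deviationCost_eq_integral_update (hfx x).measurable,
    deviationCost_eq_integral_update (hfx y).measurable]
  refine abs_integral_sub_integral_le (hint x a) (hint y a') (ae_of_all _ fun b => hfη ?_)
  refine (add_le_add_right ((dist_pi_le_iff dist_nonneg).2 fun j => ?_) _).trans h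
  rcases eq_or_ne j i with rfl | hj
  · simp
  · simp [hj]

end DeviationOscillation

section Quantization

lemma measurable_comp_of_countable_range {X Y Z : Type*} [MeasurableSpace X] [MeasurableSpace Y]
    [MeasurableSingletonClass Y] [MeasurableSpace Z] {Q : X → Y} (hQ : Measurable Q)
    (hcount : (Set.range Q).Countable) {g : Y → X → Z} (hg : ∀ y, Measurable (g y)) :
    Measurable fun x => g (Q x) x := by
  have : Countable (Set.range Q) := hcount.to_subtype
  have huncurry : Measurable fun q : Set.range Q × X => g q.1 q.2 :=
    measurable_from_prod_countable_right fun y => hg y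
  exact huncurry.comp ((hQ.subtype_mk (h := Set.mem_range_self)).prodMk measurable_id)

/-- A measurable quantizer of mesh `δ`: a finitely valued map moving no point by more than `δ`. -/
structure IsQuantizer {X : Type*} [PseudoMetricSpace X] [MeasurableSpace X] (Q : X → X)
    (δ : ℝ) : Prop where
  measurable : Measurable Q
  finite_range : (Set.range Q).Finite
  dist_le : ∀ x, dist x (Q x) ≤ δ

variable {X : Type*}

lemma isProbabilityMeasure_cellMeasure [MeasurableSpace X] {ν : Measure X} [IsFiniteMeasure ν]
    {Q : X → X} {z : X} (hν : ν (Q ⁻¹' {z}) ≠ 0) : IsProbabilityMeasure (cellMeasure ν Q z) :=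
  ProbabilityTheory.cond_isProbabilityMeasure hν

lemma ae_cellMeasure [MeasurableSpace X] [MeasurableSingletonClass X] (ν : Measure X) {Q : X → X}
    (hQ : Measurable Q) (z : X) : ∀ᵐ x ∂cellMeasure ν Q z, Q x = z :=
  ProbabilityTheory.ae_cond_mem (hQ (measurableSet_singleton z))

namespace IsQuantizer

variable [PseudoMetricSpace X] [MeasurableSpace X] {Q : X → X} {δ : ℝ}

lemma dist_le_of_eq (hQ : IsQuantizer Q δ) {x y : X} (h : Q x = Q y) : dist x y ≤ 2 * δ := by
  have hx := hQ.dist_le x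
  have hy := hQ.dist_le y
  rw [h] at hx
  linarith [dist_triangle_right x y (Q y)]

lemma abs_integral_cellMeasure_sub_le [MeasurableSingletonClass X] (hQ : IsQuantizer Q δ)
    {ν : Measure X} [IsFiniteMeasure ν] {x : X} (hν : ν (Q ⁻¹' {Q x}) ≠ 0) {g : X → ℝ} {η : ℝ}
    (hg : Integrable g (cellMeasure ν Q (Q x))) (hη : ∀ y, dist y x ≤ 2 * δ → |g y - g x| ≤ η) :
    |∫ y, g y ∂cellMeasure ν Q (Q x) - g x| ≤ η := by
  have := isProbabilityMeasure_cellMeasure hν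
  have hclose : ∀ᵐ y ∂cellMeasure ν Q (Q x), |g y - g x| ≤ η :=
    (ae_cellMeasure ν hQ.measurable (Q x)).mono fun y hy => hη y (hQ.dist_le_of_eq hy)
  simpa using abs_integral_sub_integral_le hg (integrable_const (g x)) hclose

end IsQuantizer

end Quantization

section BestResponse

variable {X ι : Type*} [Fintype ι] [DecidableEq ι] {A : ι → Type*} [∀ j, MeasurableSpace (A j)]

/-- The least expected cost at `x` of player `i` over all pure actions when the others follow the
stationary policies `π j` and `f x b` is the cost of the action profile `b`. The best-response
operator is this applied to `stageValue`. -/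
def bestResponse (i : ι) (π : ∀ j, X → Measure (A j)) (f : X → (∀ j, A j) → ℝ) (x : X) : ℝ :=
  ⨅ a : A i, deviationCost i (fun j => π j x) (f x) a

/-- The counterpart of `bestResponse` in the finite model: actions are restricted to `S`, and the
cost is averaged over the cell represented by `z`. -/
def quantizedBestResponse [MeasurableSpace X] (ν : Measure X) (Q : X → X) (i : ι) (S : Set (A i))
    (π : ∀ j, X → Measure (A j)) (f : X → (∀ j, A j) → ℝ) (z : X) : ℝ :=
  sInf {v : ℝ | ∃ a ∈ S, v = ∫ x, deviationCost i (fun j => π j z) (f x) a ∂cellMeasure ν Q z}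

variable {i : ι} {π : ∀ j, X → Measure (A j)} {f g : X → (∀ j, A j) → ℝ}

lemma quantizedBestResponse_eq_iInf [MeasurableSpace X] (ν : Measure X) (Q : X → X)
    (S : Set (A i)) (z : X) : quantizedBestResponse ν Q i S π f z =
      ⨅ a : S, ∫ x, deviationCost i (fun j => π j z) (f x) a ∂cellMeasure ν Q z := by
  rw [quantizedBestResponse, iInf]
  congr 1
  ext v
  simp [eq_comm]

variable [∀ j x, IsProbabilityMeasure (π j x)]

lemma abs_quantizedBestResponse_le [MeasurableSpace X] {ν : Measure X} [IsFiniteMeasure ν]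
    {Q : X → X} {S : Set (A i)} (hS : S.Nonempty) {z : X} (hν : ν (Q ⁻¹' {z}) ≠ 0) {K : ℝ}
    (hK : ∀ x b, |f x b| ≤ K) : |quantizedBestResponse ν Q i S π f z| ≤ K := by
  have := isProbabilityMeasure_cellMeasure hν
  have := hS.to_subtype
  rw [quantizedBestResponse_eq_iInf]
  exact abs_ciInf_le fun a => abs_integral_le_of_abs_le
    (ae_of_all _ fun x => abs_deviationCost_le (hK x) a.1)

variable [∀ j, PseudoMetricSpace (A j)] [∀ j, CompactSpace (A j)] [∀ j, BorelSpace (A j)]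
  [Nonempty (A i)]

lemma abs_bestResponse_sub_le {x : X} {ε : ℝ} (hf : IsBoundedBaireOne (f x))
    (hg : IsBoundedBaireOne (g x)) (hε : ∀ b, |f x b - g x b| ≤ ε) :
    |bestResponse i π f x - bestResponse i π g x| ≤ ε := by
  obtain ⟨K, hK⟩ := hf.exists_abs_le
  exact abs_ciInf_sub_ciInf_le (bddBelow_range_of_abs_le (abs_deviationCost_le hK))
    (abs_deviationCost_sub_le hf hg hε)

variable [MetricSpace X] [CompactSpace X] [MeasurableSpace X] [BorelSpace X] {Q : X → X}

lemma measurable_bestResponse (hQ : Measurable Q) (hcount : (Set.range Q).Countable)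
    (hπ : ∀ j x, π j x = π j (Q x))
    (hf : IsBoundedBaireOne fun q : X × (∀ j, A j) => f q.1 q.2) :
    Measurable (bestResponse i π f) := by
  have hcell (x : X) :
      bestResponse i π f x = ⨅ a, deviationCost i (fun j => π j (Q x)) (f x) a := by
    rw [bestResponse, funext fun j => hπ j x]
  rw [funext hcell]
  exact measurable_comp_of_countable_range hQ hcount
    (g := fun z x => ⨅ a, deviationCost i (fun j => π j z) (f x) a)
    fun z => (isBoundedBaireOne_deviationCost hf).measurable_iInf

lemma abs_quantizedBestResponse_sub_bestResponse_le {δ η : ℝ} (hQ : IsQuantizer Q δ)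
    {ν : Measure X} [IsFiniteMeasure ν] {x : X} (hν : ν (Q ⁻¹' {Q x}) ≠ 0) {S : Set (A i)}
    (hS : ∀ a, ∃ b ∈ S, dist a b ≤ δ) (hπ : ∀ j, π j x = π j (Q x))
    (hf : IsBoundedBaireOne fun q : X × (∀ j, A j) => f q.1 q.2)
    (hη : HasOscillationLE f (2 * δ) η) :
    |quantizedBestResponse ν Q i S π f (Q x) - bestResponse i π f x| ≤ 2 * η := by
  set φ : X → A i → ℝ := fun y a => deviationCost i (fun j => π j (Q x)) (f y) a
  have hφ : IsBoundedBaireOne fun q : X × A i => φ q.1 q.2 := isBoundedBaireOne_deviationCost hf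
  have hφη : HasOscillationLE φ (2 * δ) η := hasOscillationLE_deviationCost hη hf i _
  obtain ⟨K, hK⟩ := hφ.exists_abs_le
  have hδ : 0 ≤ δ := dist_nonneg.trans (hQ.dist_le x)
  have := isProbabilityMeasure_cellMeasure hν
  obtain ⟨b, hb, -⟩ := hS (Classical.arbitrary (A i))
  have : Nonempty S := ⟨⟨b, hb⟩⟩
  have haverage : |(⨅ a : S, ∫ y, φ y a ∂cellMeasure ν Q (Q x)) - ⨅ a : S, φ x a| ≤ η := by
    refine abs_ciInf_sub_ciInf_le (bddBelow_range_of_abs_le fun a =>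
      abs_integral_le_of_abs_le (ae_of_all _ fun y => hK (y, a.1))) fun a => ?_
    refine hQ.abs_integral_cellMeasure_sub_le hν
      ((hφ.comp_continuous (Continuous.prodMk_left a.1)).integrable _) fun y hy => hφη ?_
    simpa using hy
  have hnet : |(⨅ a : S, φ x a) - ⨅ a, φ x a| ≤ η := by
    refine abs_ciInf_subtype_sub_ciInf_le (bddBelow_range_of_abs_le fun a => hK (x, a))
      fun a => ?_
    obtain ⟨b, hb, hab⟩ := hS a
    refine ⟨b, hb, hφη ?_⟩
    rw [dist_self, dist_comm]
    linarith
  rw [quantizedBestResponse_eq_iInf, bestResponse, funext hπ, two_mul]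
  exact (abs_sub_le _ _ _).trans (add_le_add haverage hnet)

end BestResponse

section FixedPoints

variable {ι : Type*} [Fintype ι] [DecidableEq ι] {A : ι → Type*} [∀ j, MeasurableSpace (A j)]
  {X : Type*} [MeasurableSpace X] {i : ι} {c : X → (∀ j, A j) → ℝ}
  {p : X → (∀ j, A j) → Measure X} [∀ x b, IsProbabilityMeasure (p x b)] {β C : ℝ} {Q : X → X}
  {ν : Measure X} [IsFiniteMeasure ν] {S : Set (A i)} {π : ∀ j, X → Measure (A j)}
  [∀ j x, IsProbabilityMeasure (π j x)] {J J' : X → ℝ}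

lemma abs_le_of_eq_quantizedBestResponse (hβ : |β| < 1) (hC : ∀ x b, |c x b| ≤ C)
    (hfin : (Set.range Q).Finite) (hν : ∀ x, ν (Q ⁻¹' {Q x}) ≠ 0) (hS : S.Nonempty)
    (hJQ : ∀ x, J x = J (Q x))
    (hJ : ∀ x, J (Q x) = quantizedBestResponse ν Q i S π (stageValue c p β J) (Q x)) (x : X) :
    |J x| ≤ C / (1 - |β|) := by
  have : Nonempty X := ⟨x⟩
  have hbdd : BddAbove (Set.range fun x => |J x|) := by
    refine ((hfin.image fun z => |J z|).subset ?_).bddAbove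
    rintro _ ⟨x, rfl⟩
    exact ⟨Q x, Set.mem_range_self x, congrArg abs (hJQ x).symm⟩
  refine (le_ciSup hbdd x).trans (ciSup_le_div_one_sub hβ fun x => ?_)
  rw [hJQ, hJ]
  exact abs_quantizedBestResponse_le hS (hν x) (abs_stageValue_le hC (le_ciSup hbdd))

variable [MetricSpace X] [CompactSpace X] [BorelSpace X]
  [∀ j, PseudoMetricSpace (A j)] [∀ j, CompactSpace (A j)] [∀ j, BorelSpace (A j)]

-- `J` is within `2 η` of the image of `J` under the best-response operator of the original model,
-- a `|β|`-contraction with fixed point `J'`.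
lemma ciSup_abs_sub_le_of_eq_quantizedBestResponse [Nonempty X] [Nonempty (A i)] {δ η M M' : ℝ}
    (hβ : |β| < 1) (hc : Continuous fun q : X × (∀ j, A j) => c q.1 q.2) (hC : ∀ x b, |c x b| ≤ C)
    (hp : SetwiseContinuous fun q : X × (∀ j, A j) => p q.1 q.2) (hQ : IsQuantizer Q δ)
    (hν : ∀ x, ν (Q ⁻¹' {Q x}) ≠ 0) (hS : ∀ a, ∃ b ∈ S, dist a b ≤ δ)
    (hπ : ∀ j x, π j x = π j (Q x)) (hη : HasOscillationLE (stageValue c p β J) (2 * δ) η)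
    (hJm : Measurable J) (hM : ∀ x, |J x| ≤ M) (hJQ : ∀ x, J x = J (Q x))
    (hJ : ∀ x, J (Q x) = quantizedBestResponse ν Q i S π (stageValue c p β J) (Q x))
    (hM' : ∀ x, |J' x| ≤ M') (hJ' : ∀ x, J' x = bestResponse i π (stageValue c p β J') x) :
    ⨆ x, |J x - J' x| ≤ 2 * η / (1 - |β|) := by
  have hf {V : X → ℝ} {K : ℝ} (hK : ∀ x, |V x| ≤ K) :
      IsBoundedBaireOne fun q : X × (∀ j, A j) => stageValue c p β V q.1 q.2 :=
    isBoundedBaireOne_stageValue hc hC hp hK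
  have hJm' : Measurable J' := by
    rw [funext hJ']
    exact measurable_bestResponse hQ.measurable hQ.finite_range.countable hπ (hf hM')
  have hbdd : BddAbove (Set.range fun x => |J x - J' x|) :=
    ⟨M + M', Set.forall_mem_range.2 fun x => (abs_sub _ _).trans (add_le_add (hM x) (hM' x))⟩
  refine ciSup_le_div_one_sub hβ fun x => ?_
  have hquantized : |J x - bestResponse i π (stageValue c p β J) x| ≤ 2 * η := by
    rw [hJQ, hJ]
    exact abs_quantizedBestResponse_sub_bestResponse_le hQ (hν x) hS (fun j => hπ j x) (hf hM) hη
  have hcontract : |bestResponse i π (stageValue c p β J) x - J' x| ≤ |β| * ⨆ y, |J y - J' y| := by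
    rw [hJ' x]
    exact abs_bestResponse_sub_le ((hf hM).comp_continuous (Continuous.prodMk_right x))
      ((hf hM').comp_continuous (Continuous.prodMk_right x)) fun b => abs_stageValue_sub_le
        (.of_bound hJm.aestronglyMeasurable M (ae_of_all _ hM))
        (.of_bound hJm'.aestronglyMeasurable M' (ae_of_all _ hM')) (le_ciSup hbdd)
  exact (abs_sub_le _ _ _).trans (add_le_add hquantized hcontract)

lemma ciSup_abs_sub_le_of_hasOscillationLE [Nonempty X] [Nonempty (A i)] {δ ε M' : ℝ}
    (hβ : |β| < 1) (hc : Continuous fun q : X × (∀ j, A j) => c q.1 q.2) (hC : ∀ x b, |c x b| ≤ C)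
    (hp : SetwiseContinuous fun q : X × (∀ j, A j) => p q.1 q.2) (hQ : IsQuantizer Q δ)
    (hν : ∀ x, ν (Q ⁻¹' {Q x}) ≠ 0) (hS : ∀ a, ∃ b ∈ S, dist a b ≤ δ)
    (hπ : ∀ j x, π j x = π j (Q x)) (hε : HasOscillationLE c (2 * δ) ε)
    (hJQ : ∀ x, J x = J (Q x))
    (hJ : ∀ x, J (Q x) = quantizedBestResponse ν Q i S π (stageValue c p β J) (Q x))
    (hM' : ∀ x, |J' x| ≤ M') (hJ' : ∀ x, J' x = bestResponse i π (stageValue c p β J') x) :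
    ⨆ x, |J x - J' x| ≤
      2 * (ε + |β| * (C / (1 - |β|) * quantizationModulus p Q (2 * δ))) / (1 - |β|) := by
  have hS₀ : S.Nonempty := (hS (Classical.arbitrary _)).imp fun _ => And.left
  have hK := abs_le_of_eq_quantizedBestResponse hβ hC hQ.finite_range hν hS₀ hJQ hJ
  have hJm : Measurable J := by
    rw [funext hJQ]
    exact measurable_comp_of_countable_range hQ.measurable hQ.finite_range.countable
      (g := fun z _ => J z) fun _ => measurable_const
  exact ciSup_abs_sub_le_of_eq_quantizedBestResponse hβ hc hC hp hQ hν hS hπ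
    (hasOscillationLE_stageValue hε hQ.measurable hJm hK hJQ) hJm hK hJQ hJ hM' hJ'

end FixedPoints

theorem discounted_value_approximation_general {X : Type*} [MetricSpace X] [CompactSpace X]
    [Nonempty X] [MeasurableSpace X] [BorelSpace X] {ι : Type*} [Fintype ι] [DecidableEq ι]
    {A : ι → Type*} [∀ j, MetricSpace (A j)] [∀ j, CompactSpace (A j)]
    [∀ j, MeasurableSpace (A j)] [∀ j, BorelSpace (A j)] (i : ι) [Nonempty (A i)]
    {c : X → (∀ j, A j) → ℝ} (hc : Continuous fun q : X × (∀ j, A j) => c q.1 q.2)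
    {p : X → (∀ j, A j) → Measure X} (hp_prob : ∀ x b, IsProbabilityMeasure (p x b))
    (hp : SetwiseContinuous fun q : X × (∀ j, A j) => p q.1 q.2) {β : ℝ} (hβ : |β| < 1)
    {Q : ℝ → X → X} {S : ℝ → Set (A i)} {ν : ℝ → Measure X}
    (hQ : ∀ δ > 0, IsQuantizer (Q δ) δ) (hν_fin : ∀ δ > 0, IsFiniteMeasure (ν δ))
    (hν : ∀ δ > 0, ∀ x, ν δ (Q δ ⁻¹' {Q δ x}) ≠ 0)
    (hS : ∀ δ > 0, ∀ a, ∃ b ∈ S δ, dist a b ≤ δ)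
    (hω : Tendsto (fun δ => quantizationModulus p (Q δ) (2 * δ)) (𝓝[>] 0) (𝓝 0))
    {π : ℝ → ∀ j, X → Measure (A j)} (hπ_prob : ∀ δ > 0, ∀ j x, IsProbabilityMeasure (π δ j x))
    (hπ : ∀ δ > 0, ∀ j x, π δ j x = π δ j (Q δ x)) {J J' : ℝ → X → ℝ}
    (hJQ : ∀ δ > 0, ∀ x, J δ x = J δ (Q δ x))
    (hJ : ∀ δ > 0, ∀ x, J δ (Q δ x) =
      quantizedBestResponse (ν δ) (Q δ) i (S δ) (π δ) (stageValue c p β (J δ)) (Q δ x))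
    (hJ'_bdd : ∀ δ > 0, ∃ M, ∀ x, |J' δ x| ≤ M)
    (hJ' : ∀ δ > 0, ∀ x, J' δ x = bestResponse i (π δ) (stageValue c p β (J' δ)) x) :
    Tendsto (fun δ => ⨆ x, |J δ x - J' δ x|) (𝓝[>] 0) (𝓝 0) := by
  obtain ⟨C, hC⟩ : ∃ C, ∀ x b, |c x b| ≤ C := by
    obtain ⟨C, hC⟩ := isCompact_univ.exists_bound_of_continuousOn hc.continuousOn
    exact ⟨C, fun x b => hC (x, b) trivial⟩
  have hβ' : 0 < 1 - |β| := sub_pos.2 hβ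
  refine Metric.tendsto_nhds.2 fun ε hε => ?_
  set ε' := ε / 4 * (1 - |β|) with hε'
  have hosc : ∀ᶠ δ in 𝓝[>] 0, HasOscillationLE c (2 * δ) ε' := by
    have hdouble : Tendsto (fun δ : ℝ => 2 * δ) (𝓝[>] 0) (𝓝 0) := by
      simpa using ((continuous_const_mul (2 : ℝ)).tendsto 0).mono_left nhdsWithin_le_nhds
    exact hdouble.eventually (eventually_hasOscillationLE hc (by positivity))
  have hbound : ∀ᶠ δ in 𝓝[>] 0,
      2 * (ε' + |β| * (C / (1 - |β|) * quantizationModulus p (Q δ) (2 * δ))) / (1 - |β|) < ε := by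
    refine (((((hω.const_mul _).const_mul |β|).const_add ε').const_mul 2).div_const
      (1 - |β|)).eventually_lt_const ?_
    rw [hε', div_lt_iff₀ hβ']
    nlinarith
  filter_upwards [hosc, hbound, self_mem_nhdsWithin] with δ hcδ hδε hδ
  have := hπ_prob δ hδ
  have := hν_fin δ hδ
  obtain ⟨M', hM'⟩ := hJ'_bdd δ hδ
  rw [Real.dist_0_eq_abs, abs_of_nonneg (Real.iSup_nonneg fun x => abs_nonneg _)]
  exact (ciSup_abs_sub_le_of_hasOscillationLE hβ hc hC hp (hQ δ hδ) (hν δ hδ) (hS δ hδ)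
    (hπ δ hδ) hcδ (hJQ δ hδ) (hJ δ hδ) hM' (hJ' δ hδ)).trans_lt hδε

/-- Discounted-cost approximation of nonzero-sum Markov games (Theorem 5.1 of the paper):
convergence of the extended finite-model best-response values to the original-model
discounted best-response values against the extended stationary equilibrium policies. -/
theorem discounted_value_approximation
    -- compact metric state space
    (X : Type*) [MetricSpace X] [CompactSpace X] [Nonempty X]
    [MeasurableSpace X] [BorelSpace X]
    -- compact metric action spaces of the N players
    (N : ℕ) (A : Fin N → Type*) [∀ i, MetricSpace (A i)] [∀ i, CompactSpace (A i)]
    [∀ i, Nonempty (A i)] [∀ i, MeasurableSpace (A i)] [∀ i, BorelSpace (A i)]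
    -- bounded continuous one-stage cost functions
    (c : Fin N → X → (∀ i, A i) → ℝ)
    (hc : ∀ i, Continuous fun q : X × (∀ i, A i) => c i q.1 q.2)
    -- setwise continuous Borel stochastic kernel
    (p : X → (∀ i, A i) → Measure X)
    (hp_prob : ∀ x a, IsProbabilityMeasure (p x a))
    (hp_meas : ∀ D : Set X, MeasurableSet D →
      Measurable fun q : X × (∀ i, A i) => p q.1 q.2 D)
    (hp_setwise : ∀ D : Set X, MeasurableSet D →
      Continuous fun q : X × (∀ i, A i) => (p q.1 q.2 D).toReal)
    -- discount factor
    (β : ℝ) (hβ0 : 0 < β) (hβ1 : β < 1)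
    -- quantization data: finite δ-nets, nearest-point quantizer, weighting measures
    (Xd : ℝ → Finset X) (Q : ℝ → X → X) (Ad : ℝ → ∀ i, Finset (A i)) (ν : ℝ → Measure X)
    (hXd_net : ∀ δ > (0:ℝ), ∀ x : X, ∃ z ∈ Xd δ, dist x z ≤ δ)
    (hQ_mem : ∀ δ > (0:ℝ), ∀ x, Q δ x ∈ Xd δ)
    (hQ_near : ∀ δ > (0:ℝ), ∀ x, ∀ z ∈ Xd δ, dist x (Q δ x) ≤ dist x z)
    (hQ_meas : ∀ δ > (0:ℝ), Measurable (Q δ))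
    (hAd_net : ∀ δ > (0:ℝ), ∀ i, ∀ a : A i, ∃ b ∈ Ad δ i, dist a b ≤ δ)
    (hν_prob : ∀ δ > (0:ℝ), IsProbabilityMeasure (ν δ))
    (hν_pos : ∀ δ > (0:ℝ), ∀ z ∈ Xd δ, 0 < ν δ (Q δ ⁻¹' {z}))
    -- the quantization condition `lim_{δ→0} ω_δ(2δ) = 0`
    (hquant : Tendsto
      (fun δ : ℝ => sSup {v : ℝ | ∃ x y : X, ∃ a b : ∀ i, A i,
        dist x y + dist a b ≤ 2 * δ ∧
        v = tvDist ((p x a).map (Q δ)) ((p y b).map (Q δ))})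
      (𝓝[>] 0) (𝓝 0))
    -- (already extended) stationary policies of the finite δ-model: probability measures
    -- supported on the finite action nets, piecewise constant on quantization cells
    (π : ℝ → (i : Fin N) → X → Measure (A i))
    (hπ_prob : ∀ δ > (0:ℝ), ∀ i x, IsProbabilityMeasure (π δ i x))
    (hπ_supp : ∀ δ > (0:ℝ), ∀ i x, π δ i x (Ad δ i) = 1)
    (hπ_const : ∀ δ > (0:ℝ), ∀ i x, π δ i x = π δ i (Q δ x))
    -- the extended finite-model best-response values Ĵ*_δ(π^{*,-i}_δ;·)
    (Jd : ℝ → Fin N → X → ℝ)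
    (hJd_const : ∀ δ > (0:ℝ), ∀ i x, Jd δ i x = Jd δ i (Q δ x))
    -- fixed-point equation of the finite δ-model, per state of the net
    (hJd_rec : ∀ δ > (0:ℝ), ∀ i, ∀ z ∈ Xd δ,
      Jd δ i z = sInf {v : ℝ | ∃ a ∈ Ad δ i, v =
        ∫ x, (∫ b, (c i x b + β * ∫ y, Jd δ i y ∂(p x b))
            ∂(Measure.pi (Function.update (fun j => π δ j z) i (Measure.dirac a))))
          ∂(cellMeasure (ν δ) (Q δ) z)})
    -- the minimum is attained by the equilibrium mixed action π^{*,i}_δ(z)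
    (hJd_attain : ∀ δ > (0:ℝ), ∀ i, ∀ z ∈ Xd δ,
      Jd δ i z =
        ∫ x, (∫ b, (c i x b + β * ∫ y, Jd δ i y ∂(p x b))
            ∂(Measure.pi fun j => π δ j z))
          ∂(cellMeasure (ν δ) (Q δ) z))
    -- J*(π^{*,-i}_δ;·): the unique bounded fixed point of the original-model
    -- best-response operator against the extended policies
    (Js : ℝ → Fin N → X → ℝ)
    (hJs_bdd : ∀ δ > (0:ℝ), ∀ i, ∃ M : ℝ, ∀ x, |Js δ i x| ≤ M)
    (hJs_fix : ∀ δ > (0:ℝ), ∀ i, ∀ x : X,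
      Js δ i x = ⨅ a : A i,
        ∫ b, (c i x b + β * ∫ y, Js δ i y ∂(p x b))
          ∂(Measure.pi (Function.update (fun j => π δ j x) i (Measure.dirac a)))) :
    -- conclusion: uniform convergence of the value functions as δ → 0
    ∀ i : Fin N,
      Tendsto (fun δ : ℝ => ⨆ x : X, |Jd δ i x - Js δ i x|) (𝓝[>] 0) (𝓝 0) := by
  intro i
  have hquantizer : ∀ δ > 0, IsQuantizer (Q δ) δ := fun δ hδ =>
    { measurable := hQ_meas δ hδ
      finite_range := (Xd δ).finite_toSet.subset (Set.range_subset_iff.2 (hQ_mem δ hδ))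
      dist_le := fun x => by
        obtain ⟨z, hz, hxz⟩ := hXd_net δ hδ x
        exact (hQ_near δ hδ x z hz).trans hxz }
  have hcell : ∀ δ > 0, ∀ x, ν δ (Q δ ⁻¹' {Q δ x}) ≠ 0 := fun δ hδ x =>
    (hν_pos δ hδ _ (hQ_mem δ hδ x)).ne'
  have hfinite (δ : ℝ) (hδ : 0 < δ) : IsFiniteMeasure (ν δ) := by
    have := hν_prob δ hδ
    infer_instance
  have hβ : |β| < 1 := by rwa [abs_of_pos hβ0]
  exact discounted_value_approximation_general i (hc i) hp_prob hp_setwise hβ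
    (S := fun δ => Ad δ i) hquantizer hfinite hcell
    (fun δ hδ => hAd_net δ hδ i) hquant hπ_prob hπ_const (fun δ hδ => hJd_const δ hδ i)
    (fun δ hδ x => hJd_rec δ hδ i _ (hQ_mem δ hδ x)) (fun δ hδ => hJs_bdd δ hδ i)
    fun δ hδ => hJs_fix δ hδ i

end
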